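/- For every natural number n ≥ 39, every admissible multiplicity function m, every sum labeling ℓ of G(n,m), and every vertex v = (i,j) of G(n,m): if ℓ(v) = 1, then i ≤ 3. -/

import Mathlib

/-- `Sn n = {2,3,…,n} ∪ {n+2}`. -/
def Sn (n : ℕ) : Set ℕ := {k | (2 ≤ k ∧ k ≤ n) ∨ k = n + 2}

/-- `m` is an admissible multiplicity function for `Sn n`. -/
def Admissible (n : ℕ) (m : ℕ → ℕ) : Prop :=
  (∀ i ∈ Sn n, 2 * i ∈ Sn n → 2 ≤ m i) ∧
  (∀ i ∈ Sn n, 2 * i ∉ Sn n → m i = 1) ∧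
  (∀ i, i ∉ Sn n → m i = 0)

/-- The vertex set of `G(n,m)`: pairs `(i,j)` with `i ∈ Sn n` and `j < m i`. -/
def Vnm (n : ℕ) (m : ℕ → ℕ) : Set (ℕ × ℕ) := {p | p.1 ∈ Sn n ∧ p.2 < m p.1}

/-- Distinct vertices `u`, `v` of `G(n,m)` are adjacent iff `u.1 + v.1 ∈ Sn n`. -/
def AdjG (n : ℕ) (u v : ℕ × ℕ) : Prop := u ≠ v ∧ u.1 + v.1 ∈ Sn n

/-- `psi m i` is the set of vertices induced by the integer `i`. -/
def psi (m : ℕ → ℕ) (i : ℕ) : Set (ℕ × ℕ) := {p | p.1 = i ∧ p.2 < m i}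

/-- The set of proper terminals of a vertex `v` of `G(n,m)`. -/
def tau (n : ℕ) (m : ℕ → ℕ) (v : ℕ × ℕ) : Set (ℕ × ℕ) :=
  {w ∈ Vnm n m | w ≠ v ∧ v.1 + w.1 ∉ Sn n}

/-- A (possibly non-injective) sum labeling of the graph `G(n,m)`. -/
def IsSumLabelingG (n : ℕ) (m : ℕ → ℕ) (ℓ : ℕ × ℕ → ℕ) : Prop :=
  (∀ v ∈ Vnm n m, 1 ≤ ℓ v) ∧
  ∀ u ∈ Vnm n m, ∀ v ∈ Vnm n m, u ≠ v →
    (AdjG n u v ↔ ∃ w ∈ Vnm n m, ℓ u + ℓ v = ℓ w)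

/-!
Let `L` be the set of labels and call `c ∈ L` a terminal of `s` if `s + c ∉ L`. Translation by `s`
carries the other elements of `L` to elements of `L` above `s`, so at most as many labels are `≤ s`
as `s` has terminals. The vertices of classes `2` and `3` have very few non-neighbours, hence their
labels lie at the bottom of `L`. If `1` were the label of a vertex of class `i ≥ 4`, this would
force class `2` to carry a single label `a` and class `3` to carry `a + 1`. If `a + c` and
`a + 1 + c` are both labels then `a + c` is not a terminal of `1`, so `1` has fewer terminals than
`a` and `a + 1` together, whereas a vertex of class `i ≥ 4` has too many non-neighbours for that.
-/

section Terminals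

/-- The terminals of `s` in a set `L` of naturals: the elements of `L` that translation by `s` moves
out of `L`. This is the arithmetic counterpart of `tau`, except that `s` may be a terminal of
itself. -/
def terminals (L : Set ℕ) (s : ℕ) : Set ℕ := {c ∈ L | s + c ∉ L}

variable {L : Set ℕ}

theorem terminals_subset_self (L : Set ℕ) (s : ℕ) : terminals L s ⊆ L := Set.sep_subset _ _

theorem ncard_setOf_le_le_ncard_terminals (hL : L.Finite) (h0 : 0 ∉ L) (s : ℕ) :
    {c ∈ L | c ≤ s}.ncard ≤ (terminals L s).ncard := by
  have hshift : (L \ terminals L s).ncard ≤ (L \ {c ∈ L | c ≤ s}).ncard := by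
    refine Set.ncard_le_ncard_of_injOn (s + ·) ?_ (add_right_injective s).injOn hL.sdiff
    rintro c ⟨hc, hcs⟩
    have hpos : c ≠ 0 := ne_of_mem_of_not_mem hc h0
    exact ⟨by_contra fun h => hcs ⟨hc, h⟩, fun h => by have : s + c ≤ s := h.2; omega⟩
  have hle := Set.ncard_sdiff_add_ncard_of_subset (Set.sep_subset L (· ≤ s)) hL
  have hterm := Set.ncard_sdiff_add_ncard_of_subset (terminals_subset_self L s) hL
  omega

theorem ncard_insert_terminals_lt_ncard_union (hL : L.Finite) (h0 : 0 ∉ L) {a d : ℕ} (hda : d < a)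
    (hd : d ∈ L) (ha : a ∈ L) (had : a + d ∈ L) :
    (insert d (terminals L d)).ncard < (terminals L a ∪ terminals L (a + d)).ncard := by
  set T := insert d (terminals L d)
  set U := terminals L a ∪ terminals L (a + d)
  have hU : U ⊆ L := Set.union_subset (terminals_subset_self L a) (terminals_subset_self L _)
  have hT : insert a T ⊆ L :=
    Set.insert_subset ha (Set.insert_subset hd (terminals_subset_self L d))
  have haT : a ∉ T := by
    rintro (rfl | h)
    · exact hda.false
    · exact h.2 (add_comm a d ▸ had)
  have hshift : (L \ U).ncard ≤ (L \ insert a T).ncard := by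
    refine Set.ncard_le_ncard_of_injOn (a + ·) ?_ (add_right_injective a).injOn hL.sdiff
    rintro c ⟨hc, hcU⟩
    have hpos : c ≠ 0 := ne_of_mem_of_not_mem hc h0
    have hac : a + c ∈ L := by_contra fun h => hcU (.inl ⟨hc, h⟩)
    have hadc : a + d + c ∈ L := by_contra fun h => hcU (.inr ⟨hc, h⟩)
    refine ⟨hac, ?_⟩
    rintro (h | h | h)
    · omega
    · omega
    · exact h.2 (by rwa [← add_assoc, add_comm d a])
  have hcardU := Set.ncard_sdiff_add_ncard_of_subset hU hL
  have hcardT := Set.ncard_sdiff_add_ncard_of_subset hT hL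
  have hinsert := Set.ncard_insert_of_notMem haT (hL.subset ((Set.subset_insert a T).trans hT))
  omega

/-- The rank bounds leave no room below `max Q` for elements other than those of
`{e} ∪ P ∪ Q`, and no room for a second element of `P`. -/
theorem exists_eq_singleton_of_ncard_setOf_le_le (hL : L.Finite) {P Q : Set ℕ} {e : ℕ} (he : e ∈ L)
    (hPL : P ⊆ L) (hQL : Q ⊆ L) (hPQ : Disjoint P Q) (hPne : P.Nonempty) (hQne : Q.Nonempty)
    (heP : ∀ p ∈ P, e < p) (heQ : ∀ q ∈ Q, e < q)
    (hP : ∀ p ∈ P, {c ∈ L | c ≤ p}.ncard ≤ P.ncard + 1)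
    (hQ : ∀ q ∈ Q, {c ∈ L | c ≤ q}.ncard ≤ Q.ncard + 2) :
    ∃ a, P = {a} ∧ (a + 1 ∈ L → a + 1 ∈ Q) := by
  have hPfin := hL.subset hPL
  have hQfin := hL.subset hQL
  obtain ⟨p, hp, hpmax⟩ := Set.exists_max_image P id hPfin hPne
  obtain ⟨q, hq, hqmax⟩ := Set.exists_max_image Q id hQfin hQne
  have heP' : e ∉ P := fun h => (heP e h).false
  have hlowP : insert e P = {c ∈ L | c ≤ p} := by
    refine Set.eq_of_subset_of_ncard_le ?_ ?_ (hL.sep _)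
    · exact Set.insert_subset ⟨he, (heP p hp).le⟩ fun c hc => ⟨hPL hc, hpmax c hc⟩
    · rw [Set.ncard_insert_of_notMem heP' hPfin]
      exact hP p hp
  have hpq : p < q := by
    by_contra! h
    have hmem : q ∈ insert e P := hlowP ▸ ⟨hQL hq, h⟩
    exact hmem.elim (heQ q hq).ne' (hPQ.notMem_of_mem_right hq)
  have hsub : insert e (P ∪ Q) ⊆ {c ∈ L | c ≤ q} :=
    Set.insert_subset ⟨he, (heQ q hq).le⟩ (Set.union_subset
      (fun c hc => ⟨hPL hc, (hpmax c hc).trans hpq.le⟩) fun c hc => ⟨hQL hc, hqmax c hc⟩)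
  have hcard : (insert e (P ∪ Q)).ncard = P.ncard + Q.ncard + 1 := by
    rw [Set.ncard_insert_of_notMem _ (hPfin.union hQfin), Set.ncard_union_eq hPQ hPfin hQfin]
    exact fun h => h.elim heP' fun h => (heQ e h).false
  have hPpos := (Set.ncard_pos hPfin).2 hPne
  have hPone : P.ncard = 1 := by
    have := (Set.ncard_le_ncard hsub (hL.sep _)).trans (hQ q hq)
    omega
  have hlowQ : insert e (P ∪ Q) = {c ∈ L | c ≤ q} :=
    Set.eq_of_subset_of_ncard_le hsub (by have := hQ q hq; omega) (hL.sep _)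
  obtain ⟨a, rfl⟩ := Set.ncard_eq_one.1 hPone
  obtain rfl : p = a := hp
  refine ⟨p, rfl, fun h => ?_⟩
  have hmem : p + 1 ∈ insert e ({p} ∪ Q) := hlowQ ▸ ⟨h, hpq⟩
  rcases hmem with h | h | h
  · have := heP p rfl
    omega
  · simp at h
  · exact h

end Terminals

section Classes

variable {n : ℕ} {m : ℕ → ℕ}

theorem mem_Sn {k : ℕ} : k ∈ Sn n ↔ (2 ≤ k ∧ k ≤ n) ∨ k = n + 2 := Iff.rfl

theorem exists_separating_class (hn : 5 ≤ n) {p q : ℕ} (hp : p ∈ Sn n) (hq : q ∈ Sn n)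
    (hpq : p < q) : ∃ c ∈ Sn n, p + c ∈ Sn n ∧ q + c ∉ Sn n ∧ c ≠ q := by
  simp only [mem_Sn] at *
  by_cases hq' : q = n + 2
  · by_cases hp' : p = n - 1
    · exact ⟨3, by omega⟩
    · exact ⟨2, by omega⟩
  by_cases hsum : p + q = n + 2
  · by_cases hdiff : q = p + 2
    · exact ⟨p - 1, by omega⟩
    · exact ⟨n - p, by omega⟩
  · exact ⟨n + 2 - p, by omega⟩

theorem exists_four_nonadjacent_classes (hn : 8 ≤ n) {i : ℕ} (hi : 4 ≤ i) :
    ∃ C : Finset ℕ, 4 ≤ C.card ∧ ∀ c ∈ C, c ∈ Sn n ∧ c ≠ i ∧ i + c ∉ Sn n := by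
  rcases (by omega : i = 4 ∨ i = 5 ∨ 6 ≤ i) with rfl | rfl | h
  · refine ⟨{n - 3, n - 1, n, n + 2}, by grind, ?_⟩
    simp only [mem_Sn, Finset.mem_insert, Finset.mem_singleton]
    omega
  · refine ⟨{n - 2, n - 1, n, n + 2}, by grind, ?_⟩
    simp only [mem_Sn, Finset.mem_insert, Finset.mem_singleton]
    omega
  · refine ⟨({n - 3, n - 2, n - 1, n, n + 2} : Finset ℕ).erase i, ?_, ?_⟩
    · have hcard : ({n - 3, n - 2, n - 1, n, n + 2} : Finset ℕ).card = 5 := by grind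
      simpa only [hcard] using Finset.pred_card_le_card_erase (a := i)
        (s := ({n - 3, n - 2, n - 1, n, n + 2} : Finset ℕ))
    · simp only [mem_Sn, Finset.mem_erase, Finset.mem_insert, Finset.mem_singleton]
      omega

theorem finite_Vnm (n : ℕ) (m : ℕ → ℕ) : (Vnm n m).Finite := by
  have hsub : Vnm n m ⊆ ⋃ i ∈ Set.Iic (n + 2), {i} ×ˢ Set.Iio (m i) := by
    rintro ⟨i, j⟩ ⟨hi, hj⟩
    rw [mem_Sn] at hi
    simp only [Set.mem_iUnion, Set.mem_prod, Set.mem_singleton_iff, Set.mem_Iic]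
    exact ⟨i, by omega, rfl, hj⟩
  exact ((Set.finite_Iic _).biUnion fun i _ =>
    (Set.finite_singleton i).prod (Set.finite_Iio _)).subset hsub

theorem psi_subset_Vnm {c : ℕ} (hc : c ∈ Sn n) : psi m c ⊆ Vnm n m := by
  rintro ⟨_, j⟩ ⟨rfl, hj⟩
  exact ⟨hc, hj⟩

theorem tau_subset_Vnm (u : ℕ × ℕ) : tau n m u ⊆ Vnm n m := Set.sep_subset _ _

namespace Admissible

theorem mk_zero_mem_Vnm (hm : Admissible n m) {c : ℕ} (hc : c ∈ Sn n) : (c, 0) ∈ Vnm n m := by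
  refine ⟨hc, ?_⟩
  by_cases h : 2 * c ∈ Sn n
  · exact Nat.zero_lt_two.trans_le (hm.1 c hc h)
  · exact (hm.2.1 c hc h).symm ▸ Nat.zero_lt_one

theorem eq_mk_zero (hm : Admissible n m) {w : ℕ × ℕ} (hw : w ∈ Vnm n m) (h : 2 * w.1 ∉ Sn n) :
    w = (w.1, 0) := by
  have hlt : w.2 < 1 := hm.2.1 w.1 hw.1 h ▸ hw.2
  exact Prod.ext rfl (Nat.lt_one_iff.1 hlt)

theorem exists_ne_of_two_mul_mem (hm : Admissible n m) {c : ℕ} (hc : c ∈ Sn n)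
    (h : 2 * c ∈ Sn n) (x : ℕ × ℕ) : ∃ w ∈ Vnm n m, w.1 = c ∧ w ≠ x := by
  by_cases hx : x = (c, 0)
  · exact ⟨(c, 1), ⟨hc, hm.1 c hc h⟩, rfl, by simp [hx]⟩
  · exact ⟨(c, 0), hm.mk_zero_mem_Vnm hc, rfl, Ne.symm hx⟩

theorem exists_ne_of_add_mem (hm : Admissible n m) {c : ℕ} (hc : c ∈ Sn n) {x : ℕ × ℕ}
    (h : x.1 + c ∈ Sn n) : ∃ w ∈ Vnm n m, w.1 = c ∧ w ≠ x := by
  by_cases hx : x.1 = c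
  · exact hm.exists_ne_of_two_mul_mem hc (by rwa [hx, ← two_mul] at h) x
  · exact ⟨(c, 0), hm.mk_zero_mem_Vnm hc, rfl, fun h' => hx (h' ▸ rfl)⟩

theorem tau_subset_of_fst_eq_two (hm : Admissible n m) (hn : 5 ≤ n) {u : ℕ × ℕ} (hu : u.1 = 2) :
    tau n m u ⊆ {(n - 1, 0), (n + 2, 0)} := by
  rintro w ⟨hw, -, hs⟩
  have hw1 := hw.1
  rw [hu] at hs
  simp only [mem_Sn] at hw1 hs
  have hclass : w.1 = n - 1 ∨ w.1 = n + 2 := by omega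
  rw [hm.eq_mk_zero hw (by rw [mem_Sn]; omega)]
  simpa using hclass

theorem tau_subset_of_fst_eq_three (hm : Admissible n m) (hn : 7 ≤ n) {u : ℕ × ℕ} (hu : u.1 = 3) :
    tau n m u ⊆ {(n - 2, 0), (n, 0), (n + 2, 0)} := by
  rintro w ⟨hw, -, hs⟩
  have hw1 := hw.1
  rw [hu] at hs
  simp only [mem_Sn] at hw1 hs
  have hclass : w.1 = n - 2 ∨ w.1 = n ∨ w.1 = n + 2 := by omega
  rw [hm.eq_mk_zero hw (by rw [mem_Sn]; omega)]
  simpa using hclass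

theorem image_tau_subset_of_fst_eq_two (hm : Admissible n m) (hn : 5 ≤ n) (ℓ : ℕ × ℕ → ℕ)
    {u : ℕ × ℕ} (hu : u.1 = 2) : ℓ '' tau n m u ⊆ {ℓ (n - 1, 0), ℓ (n + 2, 0)} := by
  simpa only [Set.image_pair] using Set.image_mono (f := ℓ) (hm.tau_subset_of_fst_eq_two hn hu)

theorem image_tau_subset_of_fst_eq_three (hm : Admissible n m) (hn : 7 ≤ n) (ℓ : ℕ × ℕ → ℕ)
    {u : ℕ × ℕ} (hu : u.1 = 3) :
    ℓ '' tau n m u ⊆ {ℓ (n - 2, 0), ℓ (n, 0), ℓ (n + 2, 0)} := by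
  simpa only [Set.image_insert_eq, Set.image_singleton] using
    Set.image_mono (f := ℓ) (hm.tau_subset_of_fst_eq_three hn hu)

theorem ncard_image_tau_le_two (hm : Admissible n m) (hn : 5 ≤ n) (ℓ : ℕ × ℕ → ℕ) {u : ℕ × ℕ}
    (hu : u.1 = 2) : (ℓ '' tau n m u).ncard ≤ 2 := by
  refine (Set.ncard_le_ncard (hm.image_tau_subset_of_fst_eq_two hn ℓ hu)).trans ?_
  exact (Set.ncard_insert_le _ _).trans_eq (by rw [Set.ncard_singleton])

theorem ncard_image_tau_le_three (hm : Admissible n m) (hn : 7 ≤ n) (ℓ : ℕ × ℕ → ℕ) {u : ℕ × ℕ}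
    (hu : u.1 = 3) : (ℓ '' tau n m u).ncard ≤ 3 := by
  refine (Set.ncard_le_ncard (hm.image_tau_subset_of_fst_eq_three hn ℓ hu)).trans ?_
  exact (Set.ncard_insert_le _ _).trans (Nat.succ_le_succ
    ((Set.ncard_insert_le _ _).trans_eq (by rw [Set.ncard_singleton])))

end Admissible

end Classes

namespace IsSumLabelingG

variable {n : ℕ} {m : ℕ → ℕ} {ℓ : ℕ × ℕ → ℕ}

theorem zero_notMem_image (hℓ : IsSumLabelingG n m ℓ) : 0 ∉ ℓ '' Vnm n m := by
  rintro ⟨w, hw, h0⟩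
  have := hℓ.1 w hw
  omega

theorem add_mem_image_iff (hℓ : IsSumLabelingG n m ℓ) {u w : ℕ × ℕ} (hu : u ∈ Vnm n m)
    (hw : w ∈ Vnm n m) (hne : u ≠ w) : ℓ u + ℓ w ∈ ℓ '' Vnm n m ↔ u.1 + w.1 ∈ Sn n := by
  have hadj : AdjG n u w ↔ u.1 + w.1 ∈ Sn n := and_iff_right hne
  rw [← hadj, hℓ.2 u hu w hw hne]
  simp only [Set.mem_image, eq_comm]

theorem image_tau_subset_terminals (hℓ : IsSumLabelingG n m ℓ) {u : ℕ × ℕ} (hu : u ∈ Vnm n m) :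
    ℓ '' tau n m u ⊆ terminals (ℓ '' Vnm n m) (ℓ u) := by
  rintro _ ⟨w, ⟨hw, hne, hs⟩, rfl⟩
  exact ⟨Set.mem_image_of_mem ℓ hw, mt (hℓ.add_mem_image_iff hu hw hne.symm).1 hs⟩

theorem terminals_subset_insert (hℓ : IsSumLabelingG n m ℓ) {u : ℕ × ℕ} (hu : u ∈ Vnm n m) :
    terminals (ℓ '' Vnm n m) (ℓ u) ⊆ insert (ℓ u) (ℓ '' tau n m u) := by
  rintro _ ⟨⟨w, hw, rfl⟩, hadd⟩
  by_cases hwu : w = u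
  · exact .inl (hwu ▸ rfl)
  · exact .inr ⟨w, ⟨hw, hwu, mt (hℓ.add_mem_image_iff hu hw (Ne.symm hwu)).2 hadd⟩, rfl⟩

/-- A second vertex of the class of `u` is adjacent to `u`, so if it has the same label then
`2 * ℓ u` is a label as well. -/
theorem terminals_subset_of_subsingleton (hℓ : IsSumLabelingG n m ℓ) (hm : Admissible n m)
    {u : ℕ × ℕ} (hu : u ∈ Vnm n m) (h2 : 2 * u.1 ∈ Sn n) (hone : (ℓ '' psi m u.1).Subsingleton) :
    terminals (ℓ '' Vnm n m) (ℓ u) ⊆ ℓ '' tau n m u := by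
  intro c hc
  refine (hℓ.terminals_subset_insert hu hc).resolve_left ?_
  rintro rfl
  obtain ⟨w, hw, hwu, hne⟩ := hm.exists_ne_of_two_mul_mem hu.1 h2 u
  have hlabel : ℓ w = ℓ u := hone ⟨w, ⟨hwu, hwu ▸ hw.2⟩, rfl⟩ ⟨u, ⟨rfl, hu.2⟩, rfl⟩
  refine hc.2 ?_
  nth_rw 2 [← hlabel]
  exact (hℓ.add_mem_image_iff hu hw hne.symm).2 (by rwa [hwu, ← two_mul])

theorem ncard_terminals_lt (hℓ : IsSumLabelingG n m ℓ) (hm : Admissible n m) {u : ℕ × ℕ}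
    (hu : u ∈ Vnm n m) (h2 : 2 * u.1 ∈ Sn n) :
    (terminals (ℓ '' Vnm n m) (ℓ u)).ncard < (ℓ '' psi m u.1).ncard + (ℓ '' tau n m u).ncard := by
  have hpsi : (ℓ '' psi m u.1).Finite := ((finite_Vnm n m).subset (psi_subset_Vnm hu.1)).image ℓ
  have htau : (ℓ '' tau n m u).Finite := ((finite_Vnm n m).subset (tau_subset_Vnm u)).image ℓ
  have hpos : 0 < (ℓ '' psi m u.1).ncard :=
    (Set.ncard_pos hpsi).2 ⟨ℓ u, u, ⟨rfl, hu.2⟩, rfl⟩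
  by_cases hone : (ℓ '' psi m u.1).ncard ≤ 1
  · have := Set.ncard_le_ncard (hℓ.terminals_subset_of_subsingleton hm hu h2
      fun _ ha _ hb => (Set.ncard_le_one hpsi).1 hone _ ha _ hb) htau
    omega
  · have := (Set.ncard_le_ncard (hℓ.terminals_subset_insert hu) (htau.insert _)).trans
      (Set.ncard_insert_le _ _)
    omega

theorem ncard_setOf_le_lt (hℓ : IsSumLabelingG n m ℓ) (hm : Admissible n m) {c k : ℕ}
    (hc : c ∈ Sn n) (h2 : 2 * c ∈ Sn n) (hk : ∀ u ∈ psi m c, (ℓ '' tau n m u).ncard ≤ k) :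
    ∀ a ∈ ℓ '' psi m c, {b ∈ ℓ '' Vnm n m | b ≤ a}.ncard < (ℓ '' psi m c).ncard + k := by
  rintro _ ⟨u, hu, rfl⟩
  have hrank := ncard_setOf_le_le_ncard_terminals ((finite_Vnm n m).image ℓ)
    hℓ.zero_notMem_image (ℓ u)
  have hterm := hℓ.ncard_terminals_lt hm (psi_subset_Vnm hc hu) (hu.1.symm ▸ h2)
  rw [hu.1] at hterm
  have := hk u hu
  omega

theorem label_ne_of_fst_lt (hℓ : IsSumLabelingG n m ℓ) (hn : 5 ≤ n) (hm : Admissible n m)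
    {x y : ℕ × ℕ} (hx : x ∈ Vnm n m) (hy : y ∈ Vnm n m) (hlt : x.1 < y.1) : ℓ x ≠ ℓ y := by
  intro heq
  obtain ⟨c, hc, hxc, hyc, hcy⟩ := exists_separating_class hn hx.1 hy.1 hlt
  obtain ⟨w, hw, rfl, hwx⟩ := hm.exists_ne_of_add_mem hc hxc
  have hwy : w ≠ y := fun h => hcy (h ▸ rfl)
  have hmem := (hℓ.add_mem_image_iff hx hw hwx.symm).2 hxc
  exact hyc ((hℓ.add_mem_image_iff hy hw hwy.symm).1 (heq ▸ hmem))

theorem label_ne_of_fst_ne (hℓ : IsSumLabelingG n m ℓ) (hn : 5 ≤ n) (hm : Admissible n m)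
    {x y : ℕ × ℕ} (hx : x ∈ Vnm n m) (hy : y ∈ Vnm n m) (hne : x.1 ≠ y.1) : ℓ x ≠ ℓ y := by
  rcases hne.lt_or_gt with h | h
  · exact hℓ.label_ne_of_fst_lt hn hm hx hy h
  · exact (hℓ.label_ne_of_fst_lt hn hm hy hx h).symm

theorem one_lt_label (hℓ : IsSumLabelingG n m ℓ) (hn : 5 ≤ n) (hm : Admissible n m)
    {v w : ℕ × ℕ} (hv : v ∈ Vnm n m) (hone : ℓ v = 1) (hw : w ∈ Vnm n m) (hne : w.1 ≠ v.1) :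
    1 < ℓ w :=
  (hℓ.1 w hw).lt_of_ne (hone ▸ hℓ.label_ne_of_fst_ne hn hm hv hw hne.symm)

theorem le_label_top (hℓ : IsSumLabelingG n m ℓ) (hm : Admissible n m) {w : ℕ × ℕ}
    (hw : w ∈ Vnm n m) : ℓ w ≤ ℓ (n + 2, 0) := by
  obtain ⟨x, hx, hmax⟩ := Set.exists_max_image _ ℓ (finite_Vnm n m) ⟨w, hw⟩
  have hisolated : ∀ c ∈ Sn n, x.1 + c ∉ Sn n := by
    intro c hc hs
    obtain ⟨y, hy, rfl, hyx⟩ := hm.exists_ne_of_add_mem hc hs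
    obtain ⟨z, hz, hsum⟩ := (hℓ.add_mem_image_iff hx hy hyx.symm).2 hs
    have hzx := hmax z hz
    have hypos := hℓ.1 y hy
    omega
  have hx1 : x.1 = n + 2 := by
    have hxS := hx.1
    have hadd2 := hisolated 2
    have hadd3 := hisolated 3
    simp only [mem_Sn] at hxS hadd2 hadd3
    omega
  have hx0 : x = (n + 2, 0) := hx1 ▸ hm.eq_mk_zero hx (by rw [mem_Sn]; omega)
  exact hx0 ▸ hmax w hw

/-- Otherwise let `x` have the largest label of class `3` and `u` be of class `2`. Both `ℓ u + ℓ x`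
and, since `ℓ x + 1` is a label, `ℓ u + ℓ x + 1` are labels; so `ℓ u + ℓ x` is the label of a
neighbour of `(n - 1, 0)`, and these all lie in class `3`. -/
theorem label_pred_ne_one (hℓ : IsSumLabelingG n m ℓ) (hn : 5 ≤ n) (hm : Admissible n m) :
    ℓ (n - 1, 0) ≠ 1 := by
  intro hone
  have h2 : 2 ∈ Sn n := by rw [mem_Sn]; omega
  have h3 : 3 ∈ Sn n := by rw [mem_Sn]; omega
  have hv : (n - 1, 0) ∈ Vnm n m := hm.mk_zero_mem_Vnm (by rw [mem_Sn]; omega)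
  obtain ⟨x, ⟨hx, hx3⟩, hmax⟩ := Set.exists_max_image {w ∈ Vnm n m | w.1 = 3} ℓ
    ((finite_Vnm n m).sep _) ⟨(3, 0), hm.mk_zero_mem_Vnm h3, rfl⟩
  obtain ⟨y, hy, hyx⟩ : ℓ x + ℓ (n - 1, 0) ∈ ℓ '' Vnm n m :=
    (hℓ.add_mem_image_iff hx hv (by rintro rfl; simp only at hx3; omega)).2
      (by rw [mem_Sn]; omega)
  obtain ⟨u, hu, hu2, huy⟩ :=
    hm.exists_ne_of_two_mul_mem h2 (by rw [mem_Sn]; omega) y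
  obtain ⟨z, hz, hzux⟩ : ℓ u + ℓ x ∈ ℓ '' Vnm n m :=
    (hℓ.add_mem_image_iff hu hx (by rintro rfl; omega)).2 (by rw [mem_Sn]; omega)
  have hxpos := hℓ.1 x hx
  have hu1 : 1 < ℓ u := hℓ.one_lt_label hn hm hv hone hu (by simp only; omega)
  have hadj : u.1 + y.1 ∈ Sn n := by
    by_contra hs
    rcases hm.tau_subset_of_fst_eq_two hn hu2 ⟨hy, huy.symm, hs⟩ with rfl | rfl
    · omega
    · have := hℓ.le_label_top hm hz
      omega
  have hzv : ℓ z + ℓ (n - 1, 0) ∈ ℓ '' Vnm n m := by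
    rw [hzux, add_assoc, ← hyx]
    exact (hℓ.add_mem_image_iff hu hy huy).2 hadj
  have hs := (hℓ.add_mem_image_iff hz hv (by rintro rfl; omega)).1 hzv
  have hz1 := hz.1
  simp only [mem_Sn] at hs hz1
  have := hmax z ⟨hz, by omega⟩
  omega

theorem five_le_ncard_insert_terminals (hℓ : IsSumLabelingG n m ℓ) (hn : 8 ≤ n)
    (hm : Admissible n m) {v : ℕ × ℕ} (hv : v ∈ Vnm n m) (hi : 4 ≤ v.1) :
    5 ≤ (insert (ℓ v) (terminals (ℓ '' Vnm n m) (ℓ v))).ncard := by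
  obtain ⟨C, hcard, hC⟩ := exists_four_nonadjacent_classes hn hi
  have hCV : ∀ c ∈ C, (c, 0) ∈ Vnm n m := fun c hc => hm.mk_zero_mem_Vnm (hC c hc).1
  have hinj : Set.InjOn (fun c => ℓ (c, 0)) C := fun c hc d hd h =>
    by_contra fun hne => hℓ.label_ne_of_fst_ne (by omega) hm (hCV c hc) (hCV d hd) hne h
  have hnotMem : ℓ v ∉ (fun c => ℓ (c, 0)) '' C := by
    rintro ⟨c, hc, h⟩
    exact hℓ.label_ne_of_fst_ne (by omega) hm (hCV c hc) hv (hC c hc).2.1 h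
  have hsub : (fun c => ℓ (c, 0)) '' C ⊆ terminals (ℓ '' Vnm n m) (ℓ v) := by
    rintro _ ⟨c, hc, rfl⟩
    exact hℓ.image_tau_subset_terminals hv
      ⟨(c, 0), ⟨hCV c hc, fun h => (hC c hc).2.1 (h ▸ rfl), (hC c hc).2.2⟩, rfl⟩
  have hfin : (terminals (ℓ '' Vnm n m) (ℓ v)).Finite :=
    ((finite_Vnm n m).image ℓ).subset (terminals_subset_self _ _)
  calc 5 ≤ C.card + 1 := by omega
    _ = (insert (ℓ v) ((fun c => ℓ (c, 0)) '' (C : Set ℕ))).ncard := by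
        rw [Set.ncard_insert_of_notMem hnotMem (C.finite_toSet.image _),
          hinj.ncard_image, Set.ncard_coe_finset]
    _ ≤ _ := Set.ncard_le_ncard (Set.insert_subset_insert hsub) (hfin.insert _)

theorem label_add_one_mem_image (hℓ : IsSumLabelingG n m ℓ) (hn : 5 ≤ n) (hm : Admissible n m)
    {u v : ℕ × ℕ} (hu : u ∈ Vnm n m) (hu2 : u.1 = 2) (hv : v ∈ Vnm n m) (hone : ℓ v = 1)
    (hi : 4 ≤ v.1) : ℓ u + 1 ∈ ℓ '' Vnm n m := by
  have hvu : v ≠ u := by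
    rintro rfl
    omega
  rw [← hone]
  refine (hℓ.add_mem_image_iff hu hv hvu.symm).2 (by_contra fun hs => ?_)
  rcases hm.tau_subset_of_fst_eq_two hn hu2 ⟨hv, hvu, hs⟩ with rfl | rfl
  · exact hℓ.label_pred_ne_one hn hm hone
  · have htop := hℓ.le_label_top hm hu
    have := hℓ.one_lt_label hn hm hv hone hu (by simp only; omega)
    omega

theorem exists_image_psi_two_eq_singleton (hℓ : IsSumLabelingG n m ℓ) (hn : 7 ≤ n)
    (hm : Admissible n m) {v : ℕ × ℕ} (hv : v ∈ Vnm n m) (hone : ℓ v = 1) (hi : 4 ≤ v.1) :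
    ∃ a, ℓ '' psi m 2 = {a} ∧ a + 1 ∈ ℓ '' psi m 3 := by
  have h2 : 2 ∈ Sn n := by rw [mem_Sn]; omega
  have h3 : 3 ∈ Sn n := by rw [mem_Sn]; omega
  have hV2 : psi m 2 ⊆ Vnm n m := psi_subset_Vnm h2
  have hV3 : psi m 3 ⊆ Vnm n m := psi_subset_Vnm h3
  have hone_lt : ∀ c ∈ Sn n, c < 4 → ∀ a ∈ ℓ '' psi m c, 1 < a := by
    rintro c hc hc4 _ ⟨u, hu, rfl⟩
    exact hℓ.one_lt_label (by omega) hm hv hone (psi_subset_Vnm hc hu) (by rw [hu.1]; omega)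
  have hdisj : Disjoint (ℓ '' psi m 2) (ℓ '' psi m 3) := by
    rw [Set.disjoint_left]
    rintro _ ⟨u, hu, rfl⟩ ⟨x, hx, hxu⟩
    exact hℓ.label_ne_of_fst_ne (by omega) hm (hV3 hx) (hV2 hu) (by rw [hx.1, hu.1]; decide) hxu
  have hrank2 := hℓ.ncard_setOf_le_lt (k := 2) hm h2 (by rw [mem_Sn]; omega) fun u hu =>
    hm.ncard_image_tau_le_two (by omega) ℓ hu.1
  have hrank3 := hℓ.ncard_setOf_le_lt (k := 3) hm h3 (by rw [mem_Sn]; omega) fun u hu =>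
    hm.ncard_image_tau_le_three hn ℓ hu.1
  have hu : (2, 0) ∈ psi m 2 := ⟨rfl, (hm.mk_zero_mem_Vnm h2).2⟩
  have hx : (3, 0) ∈ psi m 3 := ⟨rfl, (hm.mk_zero_mem_Vnm h3).2⟩
  obtain ⟨a, ha, hsucc⟩ := exists_eq_singleton_of_ncard_setOf_le_le ((finite_Vnm n m).image ℓ)
    (hone ▸ Set.mem_image_of_mem ℓ hv) (Set.image_mono hV2) (Set.image_mono hV3) hdisj
    ⟨_, _, hu, rfl⟩ ⟨_, _, hx, rfl⟩ (hone_lt 2 h2 (by omega)) (hone_lt 3 h3 (by omega))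
    (fun p hp => Nat.le_of_lt_succ (hrank2 p hp)) (fun q hq => Nat.le_of_lt_succ (hrank3 q hq))
  obtain rfl : ℓ (2, 0) = a := by
    simpa only [ha, Set.mem_singleton_iff] using Set.mem_image_of_mem ℓ hu
  exact ⟨_, ha, hsucc (hℓ.label_add_one_mem_image (by omega) hm (hV2 hu) rfl hv hone hi)⟩

theorem ncard_terminals_union_le_five (hℓ : IsSumLabelingG n m ℓ) (hn : 7 ≤ n)
    (hm : Admissible n m) {u x : ℕ × ℕ} (hu : u ∈ psi m 2) (hx : x ∈ psi m 3)
    (hone : (ℓ '' psi m 2).Subsingleton) :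
    (terminals (ℓ '' Vnm n m) (ℓ u) ∪ terminals (ℓ '' Vnm n m) (ℓ x)).ncard ≤ 5 := by
  have huV : u ∈ Vnm n m := psi_subset_Vnm (by rw [mem_Sn]; omega) hu
  have hxV : x ∈ Vnm n m := psi_subset_Vnm (by rw [mem_Sn]; omega) hx
  have hsubu := (hℓ.terminals_subset_of_subsingleton hm huV
    (by rw [hu.1, mem_Sn]; omega) (by rwa [hu.1])).trans
    (hm.image_tau_subset_of_fst_eq_two (by omega) ℓ hu.1)
  have hsubx := (hℓ.terminals_subset_insert hxV).trans
    (Set.insert_subset_insert (hm.image_tau_subset_of_fst_eq_three hn ℓ hx.1))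
  have hsub : terminals (ℓ '' Vnm n m) (ℓ u) ∪ terminals (ℓ '' Vnm n m) (ℓ x) ⊆
      ({ℓ (n - 1, 0), ℓ x, ℓ (n - 2, 0), ℓ (n, 0), ℓ (n + 2, 0)} : Finset ℕ) := by
    refine Set.union_subset (hsubu.trans ?_) (hsubx.trans ?_) <;> intro c <;>
      simp only [Set.mem_insert_iff, Set.mem_singleton_iff, Finset.mem_coe, Finset.mem_insert,
        Finset.mem_singleton] <;>
      tauto
  exact (Set.ncard_le_ncard hsub (Finset.finite_toSet _)).trans
    ((Set.ncard_coe_finset _).trans_le Finset.card_le_five)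

end IsSumLabelingG

theorem one_only_on_low_general (n : ℕ) (hn : 8 ≤ n) (m : ℕ → ℕ)
    (hm : Admissible n m) (ℓ : ℕ × ℕ → ℕ) (hℓ : IsSumLabelingG n m ℓ)
    (v : ℕ × ℕ) (hv : v ∈ Vnm n m) (hone : ℓ v = 1) :
    v.1 ≤ 3 := by
  by_contra! hi
  obtain ⟨a, ha, x, hx, hxa⟩ := hℓ.exists_image_psi_two_eq_singleton (by omega) hm hv hone hi
  obtain ⟨u, hu, rfl⟩ : a ∈ ℓ '' psi m 2 := ha ▸ rfl
  have huV : u ∈ Vnm n m := psi_subset_Vnm (by rw [mem_Sn]; omega) hu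
  have hxV : x ∈ Vnm n m := psi_subset_Vnm (by rw [mem_Sn]; omega) hx
  have hlt : 1 < ℓ u := hℓ.one_lt_label (by omega) hm hv hone huV (by rw [hu.1]; omega)
  rw [← hone] at hxa hlt
  have hmany : 5 ≤ (insert (ℓ v) (terminals (ℓ '' Vnm n m) (ℓ v))).ncard :=
    hℓ.five_le_ncard_insert_terminals hn hm hv hi
  have hfew := hℓ.ncard_terminals_union_le_five (by omega) hm hu hx
    (ha ▸ Set.subsingleton_singleton)
  have hcompare := ncard_insert_terminals_lt_ncard_union ((finite_Vnm n m).image ℓ)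
    hℓ.zero_notMem_image hlt ⟨v, hv, rfl⟩ ⟨u, huV, rfl⟩ ⟨x, hxV, hxa⟩
  rw [hxa] at hfew
  omega

/-- For `n ≥ 39`, any admissible `m`, any sum labeling `ℓ` of `G(n,m)`, and
any vertex `v = (i,j)`: if `ℓ v = 1`, then `i ≤ 3`. -/
theorem one_only_on_low (n : ℕ) (hn : 39 ≤ n) (m : ℕ → ℕ)
    (hm : Admissible n m) (ℓ : ℕ × ℕ → ℕ) (hℓ : IsSumLabelingG n m ℓ)
    (v : ℕ × ℕ) (hv : v ∈ Vnm n m) (hone : ℓ v = 1) :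
    v.1 ≤ 3 :=
  one_only_on_low_general n (by omega) m hm ℓ hℓ v hv hone
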